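/- For every real number γ > 1, the set { w ∈ ℝ : w > 0 and there exists an integer n ≥ 1 with (1 − γ)·R_n(w) + 2·w²·R_n'(w) = 0 } is infinite. -/

import Mathlib

/-- `R n x = ∑_{m=0}^{n} ((n+m)! / (m! (n-m)!)) x^m`, real version. -/
noncomputable def R (n : ℕ) (x : ℝ) : ℝ :=
  ∑ m ∈ Finset.range (n + 1),
    ((Nat.factorial (n + m) : ℝ) / ((Nat.factorial m : ℝ) * (Nat.factorial (n - m) : ℝ))) * x ^ m

/-- The coefficient of `x ^ m` in `R n`. -/
noncomputable def coefA (n m : ℕ) : ℝ :=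
  (Nat.factorial (n + m) : ℝ) / ((Nat.factorial m : ℝ) * (Nat.factorial (n - m) : ℝ))

lemma coefA_pos (n m : ℕ) : 0 < coefA n m := by
  unfold coefA; positivity

lemma coefA_succ (n m : ℕ) (h : m < n) :
    coefA n (m + 1) * ((m : ℝ) + 1) = ((n : ℝ) + m + 1) * ((n : ℝ) - m) * coefA n m := by
  obtain ⟨k, rfl⟩ : ∃ k, n = m + 1 + k := ⟨n - (m + 1), by omega⟩
  have e1 : m + 1 + k - (m + 1) = k := by omega
  have e2 : m + 1 + k - m = k + 1 := by omega
  have e3 : m + 1 + k + (m + 1) = (m + 1 + k + m) + 1 := by omega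
  unfold coefA
  rw [e1, e2, e3, Nat.factorial_succ (m + 1 + k + m), Nat.factorial_succ m,
    Nat.factorial_succ k]
  have h1 : (Nat.factorial m : ℝ) ≠ 0 := by positivity
  have h2 : (Nat.factorial k : ℝ) ≠ 0 := by positivity
  have h3 : (m : ℝ) + 1 ≠ 0 := by positivity
  have h4 : (k : ℝ) + 1 ≠ 0 := by positivity
  push_cast
  field_simp
  ring

/-- The derivative of `R n`. -/
noncomputable def dR (n : ℕ) (x : ℝ) : ℝ :=
  ∑ m ∈ Finset.range n, coefA n (m + 1) * ((m : ℝ) + 1) * x ^ m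

lemma hasDerivAt_R (n : ℕ) (x : ℝ) : HasDerivAt (R n) (dR n x) x := by
  have h : HasDerivAt (fun y : ℝ => ∑ m ∈ Finset.range (n + 1), coefA n m * y ^ m)
      (∑ m ∈ Finset.range (n + 1), coefA n m * ((m : ℝ) * x ^ (m - 1))) x :=
    HasDerivAt.fun_sum fun m _ => (hasDerivAt_pow m x).const_mul _
  rw [Finset.sum_range_succ'] at h
  have e : dR n x = ∑ k ∈ Finset.range n, coefA n (k + 1) * (((k + 1 : ℕ) : ℝ) * x ^ (k + 1 - 1))
      + coefA n 0 * (((0 : ℕ) : ℝ) * x ^ (0 - 1)) := by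
    simp [dR, mul_assoc]
  rw [e]
  exact h

lemma R_bound (n : ℕ) (w : ℝ) (h0 : 0 < w) (h1 : w ≤ 1) : n * R n w ≤ 2 * dR n w := by
  have hR : R n w = ∑ m ∈ Finset.range n, coefA n m * w ^ m + coefA n n * w ^ n :=
    Finset.sum_range_succ _ _
  have hc1 : 2 * n * ∑ m ∈ Finset.range n, coefA n m * w ^ m ≤ dR n w := by
    unfold dR
    rw [Finset.mul_sum]
    refine Finset.sum_le_sum fun m hm => ?_
    have hm := Finset.mem_range.mp hm
    rw [coefA_succ n m hm, mul_assoc _ (coefA n m)]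
    have hp : 0 ≤ coefA n m * w ^ m := mul_nonneg (coefA_pos n m).le (by positivity)
    refine mul_le_mul_of_nonneg_right ?_ hp
    have hm' : (m : ℝ) + 1 ≤ n := by exact_mod_cast hm
    have : (0 : ℝ) ≤ m := by positivity
    nlinarith
  have hnn : ∀ m, 0 ≤ coefA n (m + 1) * ((m : ℝ) + 1) * w ^ m := fun m => by
    have := coefA_pos n (m + 1)
    positivity
  have hc2 : n * (coefA n n * w ^ n) ≤ dR n w := by
    cases n with
    | zero => simp [dR]
    | succ k =>
      have h2 : coefA (k + 1) (k + 1) * ((k : ℝ) + 1) * w ^ k ≤ dR (k + 1) w :=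
        Finset.single_le_sum (f := fun m : ℕ => coefA (k + 1) (m + 1) * ((m : ℝ) + 1) * w ^ m)
          (fun m _ => hnn m) (Finset.mem_range.mpr (Nat.lt_succ_self k))
      refine le_trans ?_ h2
      have := mul_le_mul_of_nonneg_left h1 (hnn k)
      push_cast
      rw [pow_succ]
      linarith
  have hd : 0 ≤ dR n w := Finset.sum_nonneg fun m _ => hnn m
  rw [hR]
  linarith

lemma R_zero (n : ℕ) : R n 0 = 1 := by
  unfold R
  rw [Finset.sum_range_succ']
  have : (Nat.factorial n : ℝ) ≠ 0 := by positivity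
  simp [this]

lemma R_pos (n : ℕ) (w : ℝ) (h0 : 0 < w) : 0 < R n w :=
  Finset.sum_pos (fun m _ => mul_pos (coefA_pos n m) (by positivity)) ⟨0, by simp⟩

lemma small_root (γ : ℝ) (hγ : 1 < γ) (ε : ℝ) (h0 : 0 < ε) (h1 : ε ≤ 1) :
    ∃ w : ℝ, 0 < w ∧ w < ε ∧ ∃ n : ℕ, 1 ≤ n ∧
      (1 - γ) * R n w + 2 * w ^ 2 * deriv (R n) w = 0 := by
  obtain ⟨n, hn⟩ := exists_nat_gt ((γ - 1) / ε ^ 2)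
  have he : 0 < ε ^ 2 := by positivity
  have hn1 : 1 ≤ n := by
    have : (0 : ℝ) < n := lt_trans (div_pos (by linarith) he) hn
    exact_mod_cast this
  rw [div_lt_iff₀ he] at hn
  have hcont : Continuous fun w : ℝ => (1 - γ) * R n w + 2 * w ^ 2 * dR n w := by
    unfold R dR
    fun_prop
  have hlo : (1 - γ) * R n 0 + 2 * (0 : ℝ) ^ 2 * dR n 0 < 0 := by
    rw [R_zero]; linarith
  have hhi : 0 < (1 - γ) * R n ε + 2 * ε ^ 2 * dR n ε := by
    have hb := mul_le_mul_of_nonneg_left (R_bound n ε h0 h1) he.le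
    have hp := mul_lt_mul_of_pos_right hn (R_pos n ε h0)
    nlinarith
  obtain ⟨w, hw, hw0⟩ := intermediate_value_Ioo h0.le hcont.continuousOn ⟨hlo, hhi⟩
  refine ⟨w, hw.1, hw.2, n, hn1, ?_⟩
  rw [(hasDerivAt_R n w).deriv]
  exact hw0

/-- For every real `γ > 1`, the set of positive real roots of the equations
`(1 − γ) R_n(w) + 2 w² R_n'(w) = 0`, `n ≥ 1`, is infinite. -/
theorem infinitely_many_roots (γ : ℝ) (hγ : 1 < γ) :
    {w : ℝ | 0 < w ∧ ∃ n : ℕ, 1 ≤ n ∧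
      (1 - γ) * R n w + 2 * w ^ 2 * deriv (R n) w = 0}.Infinite := by
  intro hfin
  obtain ⟨w₁, h1, -, h2⟩ := small_root γ hγ 1 one_pos le_rfl
  obtain ⟨a, ha, hmin⟩ := Set.exists_min_image _ id hfin ⟨w₁, h1, h2⟩
  obtain ⟨w, hw0, hwlt, hw⟩ := small_root γ hγ (min a 1) (lt_min ha.1 one_pos) (min_le_right _ _)
  have := hmin w ⟨hw0, hw⟩
  simp only [id] at this
  exact absurd (lt_of_lt_of_le hwlt (min_le_left _ _)) (not_lt.mpr this)
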